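/- Let m ≥ 2 and let (f, p₁, p₂) be a truthful mechanism for an extended multi-unit auction with m items and 2 bidders such that for some finite α ≥ 1 and all v₁, v₂ ∈ D, the welfare v₁(f(v₁,v₂)) + v₂(m−f(v₁,v₂)) is at least (1/α) · max_{t ∈ {0,…,m}} (v₁(t) + v₂(m−t)). Then there exist positive weights w₁, w₂ > 0 and constants c_t ∈ ℝ for t ∈ {0,…,m} such that for all v₁, v₂ ∈ D, f(v₁,v₂) maximizes w₁·v₁(t) + w₂·v₂(m−t) + c_t over all t ∈ {0,…,m}; that is, f is an affine maximizer whose range is the full set of allocations. -/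

import Mathlib

/-- `v` is almost monotone on `{0,…,m}` with peak `k`:
`0 < k ≤ m` and `v(m) ≥ v(m−1) ≥ … ≥ v(k+1) ≥ v(k−1) ≥ v(k−2) ≥ … ≥ v(1)`
(the chain skips the value at `k`). -/
def AlmostMono (m k : ℕ) (v : ℕ → ℝ) : Prop :=
  0 < k ∧ k ≤ m ∧
  (∀ s, k < s → s < m → v s ≤ v (s + 1)) ∧
  (k < m → v (k - 1) ≤ v (k + 1)) ∧
  (∀ s, 1 ≤ s → s + 1 ≤ k - 1 → v s ≤ v (s + 1))

/-- `v` is a valuation of an extended multi-unit auction with `m` items: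
nonnegative, normalized (`v 0 = 0`), and almost monotone for some peak `k`. -/
def ValD (m : ℕ) (v : ℕ → ℝ) : Prop :=
  (∀ s, 0 ≤ v s) ∧ v 0 = 0 ∧ ∃ k, AlmostMono m k v

/-- Truthfulness of a direct-revelation mechanism `(f, p₁, p₂)` for an extended
multi-unit auction with `m` items and 2 bidders: reporting truthfully maximizes
each bidder's utility, for every fixed report of the other bidder.
(`f v₁ v₂` is the number of items given to bidder 1; bidder 2 gets the rest.) -/
def Truthful (m : ℕ) (f : (ℕ → ℝ) → (ℕ → ℝ) → ℕ)
    (p₁ p₂ : (ℕ → ℝ) → (ℕ → ℝ) → ℝ) : Prop :=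
  (∀ v₁ v₁' v₂, ValD m v₁ → ValD m v₁' → ValD m v₂ →
    v₁ (f v₁' v₂) - p₁ v₁' v₂ ≤ v₁ (f v₁ v₂) - p₁ v₁ v₂) ∧
  (∀ v₁ v₂ v₂', ValD m v₁ → ValD m v₂ → ValD m v₂' →
    v₂ (m - f v₁ v₂') - p₂ v₁ v₂' ≤ v₂ (m - f v₁ v₂) - p₂ v₁ v₂)

/-- The valuation worth `x` on exactly `t` items and `0` otherwise. -/
def spk (t : ℕ) (x : ℝ) : ℕ → ℝ := fun j => if j = t then x else 0

theorem spk_self (t : ℕ) (x : ℝ) : spk t x t = x := by simp [spk]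

theorem spk_ne {t j : ℕ} (x : ℝ) (h : j ≠ t) : spk t x j = 0 := by simp [spk, h]

theorem spk_val {m t : ℕ} {x : ℝ} (h1 : 1 ≤ t) (h2 : t ≤ m) (hx : 0 ≤ x) : ValD m (spk t x) := by
  refine ⟨fun s => ?_, spk_ne x (by omega), t, by omega, h2, fun s hs _ => ?_, fun _ => ?_,
    fun s _ hs => ?_⟩
  · unfold spk; split_ifs <;> simp [hx]
  · rw [spk_ne x (by omega), spk_ne x (by omega)]
  · rw [spk_ne x (by omega), spk_ne x (by omega)]
  · rw [spk_ne x (by omega), spk_ne x (by omega)]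

theorem zero_val {m : ℕ} (hm : 2 ≤ m) : ValD m (fun _ => (0 : ℝ)) := by
  refine ⟨fun s => le_rfl, rfl, m, by omega, le_rfl, ?_, ?_, ?_⟩ <;> intros <;> exact le_rfl

/-- Normalized price menus for both bidders. -/
structure Mech (m : ℕ) (α : ℝ) (f : (ℕ → ℝ) → (ℕ → ℝ) → ℕ) (π ρ : ℕ → (ℕ → ℝ) → ℝ) : Prop where
  hm : 2 ≤ m
  hα : 1 ≤ α
  hf : ∀ v₁ v₂, ValD m v₁ → ValD m v₂ → f v₁ v₂ ≤ m
  ap : ∀ v₁ v₂, ValD m v₁ → ValD m v₂ → ∀ t, t ≤ m →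
      v₁ t + v₂ (m - t) ≤ α * (v₁ (f v₁ v₂) + v₂ (m - f v₁ v₂))
  π0 : ∀ v, π 0 v = 0
  ρ0 : ∀ v, ρ 0 v = 0
  πnn : ∀ v t, ValD m v → t ≤ m → 0 ≤ π t v
  ρnn : ∀ v t, ValD m v → t ≤ m → 0 ≤ ρ t v
  A : ∀ v₁ v₂, ValD m v₁ → ValD m v₂ → ∀ t, t ≤ m →
      v₁ t - π t v₂ ≤ v₁ (f v₁ v₂) - π (f v₁ v₂) v₂
  B : ∀ v₁ v₂, ValD m v₁ → ValD m v₂ → ∀ t, t ≤ m →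
      v₂ t - ρ t v₁ ≤ v₂ (m - f v₁ v₂) - ρ (m - f v₁ v₂) v₁

namespace Mech

variable {m : ℕ} {α : ℝ} {f : (ℕ → ℝ) → (ℕ → ℝ) → ℕ} {π ρ : ℕ → (ℕ → ℝ) → ℝ}

theorem swap (M : Mech m α f π ρ) : Mech m α (fun a b => m - f b a) ρ π where
  hm := M.hm
  hα := M.hα
  hf := fun _ _ _ _ => Nat.sub_le _ _
  ap := by
    intro v₁ v₂ h1 h2 t ht
    have h := M.ap v₂ v₁ h2 h1 (m - t) (Nat.sub_le _ _)
    have hf := M.hf v₂ v₁ h2 h1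
    rw [Nat.sub_sub_self ht] at h
    simp only [Nat.sub_sub_self hf]
    linarith
  π0 := M.ρ0
  ρ0 := M.π0
  πnn := M.ρnn
  ρnn := M.πnn
  A := fun v₁ v₂ h1 h2 t ht => M.B v₂ v₁ h2 h1 t ht
  B := by
    intro v₁ v₂ h1 h2 t ht
    have hf := M.hf v₂ v₁ h2 h1
    simp only [Nat.sub_sub_self hf]
    exact M.A v₂ v₁ h2 h1 t ht

theorem αpos (M : Mech m α f π ρ) : 0 < α := lt_of_lt_of_le one_pos M.hα

theorem sel (M : Mech m α f π ρ) {t : ℕ} {x : ℝ} {v : ℕ → ℝ} (h1 : 1 ≤ t) (h2 : t ≤ m)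
    (hx : 0 < x) (hv : ValD m v) (h : π t v < x) : f (spk t x) v = t := by
  by_contra hne
  have hs := spk_val h1 h2 hx.le
  have := M.A _ _ hs hv t h2
  rw [spk_self, spk_ne x hne] at this
  have := M.πnn v _ hv (M.hf _ _ hs hv)
  linarith

theorem nsel (M : Mech m α f π ρ) {t : ℕ} {x : ℝ} {v : ℕ → ℝ} (h1 : 1 ≤ t) (h2 : t ≤ m)
    (hx : 0 < x) (hv : ValD m v) (h : f (spk t x) v = t) : π t v ≤ x := by
  have hs := spk_val h1 h2 hx.le
  have := M.A _ _ hs hv 0 (by omega)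
  rw [h, spk_self, spk_ne x (by omega), M.π0] at this
  linarith

theorem two (M : Mech m α f π ρ) {t j : ℕ} {x y : ℝ} (h1 : 1 ≤ t) (h2 : t ≤ m)
    (h3 : 1 ≤ j) (h4 : j ≤ m) (hx : 0 < x) (hy : 0 ≤ y) :
    f (spk t x) (spk j y) = t ∨ m - f (spk t x) (spk j y) = j := by
  by_contra hne
  push Not at hne
  have hs := spk_val h1 h2 hx.le
  have hs' := spk_val h3 h4 hy
  have := M.ap _ _ hs hs' t h2
  rw [spk_self, spk_ne x hne.1, spk_ne y hne.2] at this
  have := hs'.1 (m - t)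
  linarith

theorem ub (M : Mech m α f π ρ) {t j : ℕ} {y : ℝ} (h1 : 1 ≤ t) (h2 : t ≤ m)
    (h3 : 1 ≤ j) (h4 : j ≤ m) (hne : t + j ≠ m) (hy : 0 < y) : π t (spk j y) ≤ α * y := by
  have hα := M.αpos
  apply le_of_forall_gt_imp_ge_of_dense
  intro x hx
  have hx0 : 0 < x := lt_trans (by positivity) hx
  have hs := spk_val h1 h2 hx0.le
  have hs' := spk_val h3 h4 hy.le
  apply M.nsel h1 h2 hx0 hs'
  by_contra hn
  have h := (M.two h1 h2 h3 h4 hx0 hy.le).resolve_left hn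
  have := M.ap _ _ hs hs' t h2
  rw [h, spk_self, spk_self, spk_ne x hn, spk_ne y (by omega)] at this
  linarith

theorem lb (M : Mech m α f π ρ) {t j : ℕ} {y : ℝ} (h1 : 1 ≤ t) (h2 : t ≤ m)
    (h3 : 1 ≤ j) (h4 : j ≤ m) (hne : t + j ≠ m) (hy : 0 < y) : y / α ≤ π t (spk j y) := by
  have hα := M.αpos
  have hs' := spk_val h3 h4 hy.le
  by_contra hc
  push Not at hc
  obtain ⟨x, hx1, hx2⟩ := exists_between hc
  have hx0 : 0 < x := lt_of_le_of_lt (M.πnn _ _ hs' h2) hx1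
  have hs := spk_val h1 h2 hx0.le
  have h := M.sel h1 h2 hx0 hs' hx1
  have := M.ap _ _ hs hs' (m - j) (by omega)
  rw [h, Nat.sub_sub_self h4, spk_self, spk_self, spk_ne x (by omega), spk_ne y (by omega)] at this
  rw [lt_div_iff₀ hα] at hx2
  linarith

theorem ρz (M : Mech m α f π ρ) {t : ℕ} {x : ℝ} (h1 : 1 ≤ t) (h2 : t ≤ m) (hx : 0 < x) :
    ρ (m - t) (spk t x) = 0 := by
  have hs := spk_val h1 h2 hx.le
  have hz := zero_val M.hm
  have hft : f (spk t x) (fun _ => 0) = t := by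
    by_contra hn
    have := M.ap _ _ hs hz t h2
    rw [spk_self, spk_ne x hn] at this
    simp at this
    linarith
  have := M.B _ _ hs hz 0 (by omega)
  rw [hft, M.ρ0] at this
  have := M.ρnn _ (m - t) hs (by omega)
  linarith

theorem P1 (M : Mech m α f π ρ) {t j : ℕ} {x y : ℝ} (h1 : 1 ≤ t) (h2 : t ≤ m)
    (h3 : 1 ≤ j) (h4 : j ≤ m) (hx : 0 < x) (hy : 0 < y)
    (h : y < ρ j (spk t x)) : π t (spk j y) ≤ x := by
  have hs := spk_val h1 h2 hx.le
  have hs' := spk_val h3 h4 hy.le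
  rcases M.two h1 h2 h3 h4 hx hy.le with h' | h'
  · exact M.nsel h1 h2 hx hs' h'
  · have := M.B _ _ hs hs' 0 (by omega)
    rw [h', M.ρ0, spk_self, spk_ne y (by omega)] at this
    linarith

theorem P2 (M : Mech m α f π ρ) {t j : ℕ} {x y : ℝ} (h1 : 1 ≤ t) (h2 : t ≤ m)
    (h3 : 1 ≤ j) (h4 : j ≤ m) (hne : t + j ≠ m) (hx : 0 < x) (hy : 0 < y)
    (h : π t (spk j y) < x) : y ≤ ρ j (spk t x) := by
  have hs := spk_val h1 h2 hx.le
  have hs' := spk_val h3 h4 hy.le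
  have hf := M.sel h1 h2 hx hs' h
  have := M.B _ _ hs hs' j h4
  rw [hf, spk_self, spk_ne y (by omega), M.ρz h1 h2 hx] at this
  linarith

theorem F1 (M : Mech m α f π ρ) {t j : ℕ} {d : ℝ} {v : ℕ → ℝ} (hv : ValD m v) (h1 : 1 ≤ t)
    (h2 : t ≤ m) (h3 : 1 ≤ j) (h4 : j ≤ m) (hd : 0 < d) (h : d < v j - v (m - t)) :
    π t (spk j d) ≤ π t v := by
  by_contra hc
  push Not at hc
  obtain ⟨x, hx1, hx2⟩ := exists_between hc
  have hx0 : 0 < x := lt_of_le_of_lt (M.πnn _ _ hv h2) hx1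
  have hs := spk_val h1 h2 hx0.le
  have hf := M.sel h1 h2 hx0 hv hx1
  have hB := M.B _ _ hs hv j h4
  rw [hf, M.ρz h1 h2 hx0] at hB
  have := M.P1 h1 h2 h3 h4 hx0 hd (by linarith)
  linarith

theorem F2 (M : Mech m α f π ρ) {t : ℕ} {b : ℝ} {v : ℕ → ℝ} (hv : ValD m v) (h1 : 1 ≤ t)
    (h2 : t ≤ m) (hb : 0 ≤ b)
    (h : ∀ j, 1 ≤ j → j ≤ m → t + j ≠ m → v (m - t) ≤ v j →
      (j = m ∨ ∀ i, i ≤ m → v i ≤ v j) → ∃ d, v j - v (m - t) < d ∧ π t (spk j d) ≤ b) :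
    π t v ≤ b := by
  by_contra hc
  push Not at hc
  obtain ⟨x, hx1, hx2⟩ := exists_between hc
  have hx0 : 0 < x := by linarith
  have hs := spk_val h1 h2 hx0.le
  have hn : f (spk t x) v ≠ t := fun hf => by
    have := M.nsel h1 h2 hx0 hv hf
    linarith
  have hfm := M.hf _ _ hs hv
  have hB := M.B _ _ hs hv (m - t) (by omega)
  have hA := M.A _ _ hs hv 0 (by omega)
  rw [M.π0, spk_ne x (by omega), spk_ne x hn] at hA
  rw [M.ρz h1 h2 hx0] at hB
  have hap := M.ap _ _ hs hv t h2
  rw [spk_self, spk_ne x hn] at hap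
  generalize hs0 : f (spk t x) v = s at *
  have hρ := M.ρnn _ (m - s) hs (by omega)
  have hsm : s ≠ m := by
    rintro rfl
    have := hv.1 (s - t)
    rw [Nat.sub_self, hv.2.1] at hap
    linarith
  obtain ⟨d, hd, hd'⟩ := h (m - s) (by omega) (by omega) (by omega) (by linarith) (by
    by_cases hs0 : s = 0
    · left; omega
    right
    intro i hi
    by_contra hlt
    push Not at hlt
    have hi0 : i ≠ 0 := by
      rintro rfl
      rw [hv.2.1] at hlt
      have := hv.1 (m - s)
      linarith
    have hd : 0 < (v i - v (m - s)) / 2 := by linarith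
    have hne : s + i ≠ m := by
      intro h
      have : i = m - s := by omega
      rw [this] at hlt
      exact lt_irrefl _ hlt
    have e1 := M.F1 hv (t := s) (j := i) (by omega) (by omega) (by omega) hi hd (by linarith)
    have e2 := M.lb (t := s) (j := i) (by omega) (by omega) (by omega) hi hne hd
    have e3 : 0 < (v i - v (m - s)) / 2 / α := div_pos hd M.αpos
    linarith)
  have := M.P2 h1 h2 (j := m - s) (y := d) (by omega) (by omega) (by omega) hx0 (by linarith)
    (by linarith)
  linarith

end Mech

section Cauchy

theorem cauchy_sup {G : ℝ → ℝ}
    (hsup : ∀ y u z, 0 < u → 0 < z → u + z < y → G u + G z ≤ G y)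
    (hnn : ∀ d, 0 < d → 0 ≤ G d) (u : ℝ) (hu : 0 < u) (n : ℕ) :
    ∀ y, 0 < y → n * u < y → n * G u ≤ G y := by
  induction n with
  | zero => intro y hy _; simpa using hnn y hy
  | succ n ih =>
    intro y hy h
    push_cast at h ⊢
    have hn : (0 : ℝ) ≤ n * u := by positivity
    have h1 := ih ((y - u + n * u) / 2) (by linarith) (by linarith)
    have h2 := hsup y u ((y - u + n * u) / 2) hu (by linarith) (by linarith)
    linarith

theorem cauchy_sub {G : ℝ → ℝ}
    (hsub : ∀ y u z, 0 < y → 0 < u → 0 < z → y < u + z → G y ≤ G u + G z)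
    (hmono : ∀ u y, 0 < u → u < y → G u ≤ G y) (u : ℝ) (hu : 0 < u) (n : ℕ) :
    ∀ y, 0 < y → y < n * u → G y ≤ n * G u := by
  induction n with
  | zero => intro y hy h; simp at h; linarith
  | succ n ih =>
    intro y hy h
    push_cast at h ⊢
    rcases Nat.eq_zero_or_pos n with rfl | hn
    · simp at h ⊢
      exact hmono y u hy h
    · have hn' : (0 : ℝ) < n * u := by positivity
      have hmax : max (y - u) 0 < n * u := max_lt (by linarith) hn'
      have e1 := le_max_left (y - u) 0
      have e2 := le_max_right (y - u) 0
      have h1 := ih ((max (y - u) 0 + n * u) / 2) (by linarith) (by linarith)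
      have h2 := hsub y u ((max (y - u) 0 + n * u) / 2) hy hu (by linarith) (by linarith)
      linarith

theorem cauchy_lin {α : ℝ} {G H K : ℝ → ℝ} (hα : 0 < α)
    (hG : ∀ d, 0 < d → 0 ≤ G d)
    (hH : ∀ d, 0 < d → 0 ≤ H d ∧ H d ≤ α * d) (hK : ∀ d, 0 < d → 0 ≤ K d ∧ K d ≤ α * d)
    (hL : ∀ y u z, 0 < y → 0 < u → 0 < z → y < u + z → G y ≤ H u + K z)
    (hU : ∀ y u z, 0 < u → 0 < z → u + z < y → H u + K z ≤ G y) :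
    ∀ d, 0 < d → G d = G 1 * d ∧ H d = G 1 * d ∧ K d = G 1 * d := by
  have small : ∀ e : ℝ, 0 < e → ∃ z, 0 < z ∧ α * z ≤ e := fun e he =>
    ⟨e / α, by positivity, by rw [mul_div_cancel₀ _ hα.ne']⟩
  have GH : ∀ y u, 0 < y → y < u → G y ≤ H u := by
    intro y u hy h
    apply le_of_forall_pos_le_add
    intro e he
    obtain ⟨z, hz, hz'⟩ := small e he
    have := hL y u z hy (by linarith) hz (by linarith)
    have := (hK z hz).2
    linarith
  have GK : ∀ y u, 0 < y → y < u → G y ≤ K u := by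
    intro y u hy h
    apply le_of_forall_pos_le_add
    intro e he
    obtain ⟨z, hz, hz'⟩ := small e he
    have := hL y z u hy hz (by linarith) (by linarith)
    have := (hH z hz).2
    linarith
  have HG : ∀ u y, 0 < u → u < y → H u ≤ G y := by
    intro u y hu h
    have := hU y u ((y - u) / 2) hu (by linarith) (by linarith)
    have := (hK ((y - u) / 2) (by linarith)).1
    linarith
  have KG : ∀ u y, 0 < u → u < y → K u ≤ G y := by
    intro u y hu h
    have := hU y ((y - u) / 2) u (by linarith) hu (by linarith)
    have := (hH ((y - u) / 2) (by linarith)).1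
    linarith
  have hsup : ∀ y u z, 0 < u → 0 < z → u + z < y → G u + G z ≤ G y := by
    intro y u z hu hz h
    have h1 := GH u (u + (y - u - z) / 3) hu (by linarith)
    have h2 := GK z (z + (y - u - z) / 3) hz (by linarith)
    have := hU y (u + (y - u - z) / 3) (z + (y - u - z) / 3) (by linarith) (by linarith)
      (by linarith)
    linarith
  have hsub : ∀ y u z, 0 < y → 0 < u → 0 < z → y < u + z → G y ≤ G u + G z := by
    intro y u z hy hu hz h
    -- shrink both by the factor l < 1
    obtain ⟨l, hl1, hl2⟩ := exists_between ((div_lt_one (by linarith : 0 < u + z)).2 h)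
    have hl0 : 0 < l := lt_trans (by positivity) hl1
    rw [div_lt_iff₀ (by linarith)] at hl1
    have h1 := HG (l * u) u (by positivity) (by nlinarith)
    have h2 := KG (l * z) z (by positivity) (by nlinarith)
    have := hL y (l * u) (l * z) hy (by positivity) (by positivity) (by linarith)
    linarith
  have hmono : ∀ u y, 0 < u → u < y → G u ≤ G y := by
    intro u y hu h
    have h1 := GH u ((u + y) / 2) hu (by linarith)
    have h2 := HG ((u + y) / 2) y (by linarith) (by linarith)
    linarith
  have hg1 := hG 1 one_pos
  have lin : ∀ d, 0 < d → G d = G 1 * d := by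
    intro d hd
    have key : ∀ n : ℕ, n * G d ≤ n * (G 1 * d) + 2 * G 1 ∧
        n * (G 1 * d) ≤ n * G d + 2 * G 1 := by
      intro n
      have hnd : (0 : ℝ) ≤ n * d := by positivity
      have hk1 := Nat.floor_le hnd
      have hk2 := Nat.lt_floor_add_one (n * d : ℝ)
      generalize ⌊(n * d : ℝ)⌋₊ = k at hk1 hk2
      constructor
      · have h1 := cauchy_sup hsup hG d hd n (k + 1) (by positivity) hk2
        have h2 := cauchy_sub hsub hmono 1 one_pos (k + 2) (k + 1) (by positivity)
          (by push_cast; linarith)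
        push_cast at h2
        have := mul_le_mul_of_nonneg_left hk1 hg1
        linarith
      · rcases Nat.lt_or_ge k 2 with hk | hk
        · have hk' : (k : ℝ) ≤ 1 := by exact_mod_cast (by omega : k ≤ 1)
          have := mul_le_mul_of_nonneg_left (by linarith : (n * d : ℝ) ≤ 2) hg1
          have : 0 ≤ n * G d := mul_nonneg (Nat.cast_nonneg _) (hG d hd)
          linarith
        · obtain ⟨i, rfl⟩ := Nat.exists_eq_add_of_le hk
          push_cast at hk1 hk2
          have hi : (0 : ℝ) ≤ i := Nat.cast_nonneg _
          have h1 := cauchy_sub hsub hmono d hd n (i + 3 / 2) (by positivity) (by linarith)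
          have h2 := cauchy_sup hsup hG 1 one_pos (i + 1) (i + 3 / 2) (by positivity)
            (by push_cast; linarith)
          push_cast at h2
          have := mul_le_mul_of_nonneg_left hk2.le hg1
          linarith
    have arch : ∀ e : ℝ, (∀ n : ℕ, n * e ≤ 2 * G 1) → e ≤ 0 := by
      intro e he
      by_contra hc
      push Not at hc
      obtain ⟨n, hn⟩ := exists_nat_gt (2 * G 1 / e)
      rw [div_lt_iff₀ hc] at hn
      have := he n
      linarith
    have a1 := arch (G d - G 1 * d) (fun n => by have := (key n).1; linarith)
    have a2 := arch (G 1 * d - G d) (fun n => by have := (key n).2; linarith)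
    linarith
  have sq : ∀ F : ℝ → ℝ, (∀ y u, 0 < y → y < u → G y ≤ F u) → (∀ u y, 0 < u → u < y → F u ≤ G y) →
      ∀ d, 0 < d → F d = G 1 * d := by
    intro F h1 h2 d hd
    have hc : Continuous fun y : ℝ => G 1 * y := by fun_prop
    apply le_antisymm
    · have hc' := (hc.tendsto d).mono_left (nhdsWithin_le_nhds (s := Set.Ioi d))
      refine ge_of_tendsto hc' ?_
      filter_upwards [self_mem_nhdsWithin] with y hy
      rw [← lin y (lt_trans hd hy)]
      exact h2 d y hd hy
    · have hc' := (hc.tendsto d).mono_left (nhdsWithin_le_nhds (s := Set.Iio d))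
      refine le_of_tendsto hc' ?_
      filter_upwards [self_mem_nhdsWithin, mem_nhdsWithin_of_mem_nhds (lt_mem_nhds hd)] with y hy hy'
      rw [← lin y hy']
      exact h1 y d hy' hy
  exact fun d hd => ⟨lin d hd, sq H GH HG d hd, sq K GK KG d hd⟩

end Cauchy

namespace Mech

variable {m : ℕ} {α : ℝ} {f : (ℕ → ℝ) → (ℕ → ℝ) → ℕ} {π ρ : ℕ → (ℕ → ℝ) → ℝ}

/-- Test valuation of bidder 2. -/
def W2 (m r : ℕ) (ε y z : ℝ) : ℕ → ℝ := fun j =>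
  if j = 0 then 0 else if j = m then ε + y else if j = m - r then ε + z else ε

/-- Test valuation of bidder 1. -/
def W1 (t r : ℕ) (x x' : ℝ) : ℕ → ℝ := fun j =>
  if j = t then x else if r ≤ j then x' else 0

theorem W2_val {r : ℕ} {ε y z : ℝ} (h1 : 1 ≤ r) (h2 : r < m) (hε : 0 ≤ ε) (hz : 0 ≤ z)
    (hy : 0 ≤ y) : ValD m (W2 m r ε y z) := by
  refine ⟨fun s => ?_, by simp [W2], m - r, by omega, by omega, fun s hs hs' => ?_, fun _ => ?_,
    fun s hs1 hs => ?_⟩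
  · unfold W2; split_ifs <;> linarith
  · unfold W2; split_ifs <;> first | omega | contradiction | linarith
  · unfold W2; split_ifs <;> first | omega | contradiction | linarith
  · unfold W2; split_ifs <;> first | omega | contradiction | linarith

theorem W1_val {t r : ℕ} {x x' : ℝ} (h1 : 1 ≤ t) (h2 : t ≤ m) (hr : 1 ≤ r) (hx : 0 ≤ x)
    (hx' : 0 ≤ x') : ValD m (W1 t r x x') := by
  refine ⟨fun s => ?_, ?_, t, by omega, by omega, fun s hs hs' => ?_, fun _ => ?_,
    fun s hs1 hs => ?_⟩
  · unfold W1; split_ifs <;> linarith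
  · unfold W1; split_ifs <;> first | omega | contradiction | linarith
  · unfold W1; split_ifs <;> first | omega | contradiction | linarith
  · unfold W1; split_ifs <;> first | omega | contradiction | linarith
  · unfold W1; split_ifs <;> first | omega | contradiction | linarith

/-- Behaviour on the test pair: the outcome is `0`, `r` or `t`, bidder 2 pays `0` at `t`. -/
theorem test (M : Mech m α f π ρ) {t r : ℕ} {ε y z x x' : ℝ} (ht1 : 1 ≤ t) (ht2 : t ≤ m)
    (hr1 : 1 ≤ r) (hr2 : r < m) (hrt : r ≠ t) (hε : 0 ≤ ε) (hε' : t = m → ε = 0)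
    (hε'' : t ≠ m → 0 < ε) (hz : 0 < z) (hzy : z < y) (hx' : 0 < x') (hx : x' < x) :
    ρ (m - t) (W1 t r x x') = 0 ∧
    (f (W1 t r x x') (W2 m r ε y z) = 0 ∨ f (W1 t r x x') (W2 m r ε y z) = r ∨
      f (W1 t r x x') (W2 m r ε y z) = t) := by
  have hv1 : ValD m (W1 t r x x') := W1_val ht1 ht2 hr1 (by linarith) hx'.le
  have hv2 : ValD m (W2 m r ε y z) := W2_val hr1 hr2 hε hz.le (by linarith)
  have Wt : W1 t r x x' t = x := by simp [W1]
  have Wn : ∀ s, s ≠ t → W1 t r x x' s ≤ x' := by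
    intro s hs; unfold W1; split_ifs <;> first | omega | contradiction | linarith
  have W2t : W2 m r ε y z (m - t) = ε := by
    unfold W2; split_ifs <;> first | omega | skip
    · exact (hε' (by omega)).symm
    · rfl
  have h0 : ρ (m - t) (W1 t r x x') = 0 := by
    rcases eq_or_ne t m with h | h
    · rw [h, Nat.sub_self, M.ρ0]
    · refine le_antisymm ?_ (M.ρnn _ _ hv1 (by omega))
      refine M.swap.F2 hv1 (by omega) (by omega) le_rfl ?_
      intro j hj1 hj2 hj3 hj4
      rw [Nat.sub_sub_self ht2, Wt] at hj4
      have := Wn j (by omega)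
      linarith
  refine ⟨h0, ?_⟩
  have hfm := M.hf _ _ hv1 hv2
  have hB := M.B _ _ hv1 hv2 (m - t) (by omega)
  rw [h0, W2t] at hB
  generalize f (W1 t r x x') (W2 m r ε y z) = s at *
  by_contra hc
  push Not at hc
  obtain ⟨c1, c2, c3⟩ := hc
  rcases eq_or_ne s m with h | h
  · have : W2 m r ε y z (m - s) = 0 := by rw [h, Nat.sub_self]; exact hv2.2.1
    have e := M.ρnn _ (m - s) hv1 (by omega)
    have := hε'' (by omega)
    linarith
  · have : W2 m r ε y z (m - s) = ε := by
      unfold W2; split_ifs <;> first | omega | rfl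
    have hd : 0 < (x - x') / 2 := by linarith
    have w := Wn s c3
    have e1 := M.swap.F1 hv1 (t := m - s) (j := t) (d := (x - x') / 2) (by omega) (by omega)
      ht1 ht2 hd (by rw [Wt, Nat.sub_sub_self hfm]; linarith)
    have e2 := M.swap.lb (t := m - s) (j := t) (y := (x - x') / 2) (by omega) (by omega)
      ht1 ht2 (by omega) hd
    have e3 : 0 < (x - x') / 2 / α := div_pos hd M.αpos
    linarith

theorem triple (M : Mech m α f π ρ) {t r : ℕ} {y z : ℝ} (ht1 : 1 ≤ t) (ht2 : t ≤ m)
    (hr1 : 1 ≤ r) (hr2 : r < m) (hrt : r ≠ t) (hz : 0 < z) (hzy : z < y) :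
    ∃ u q : ℝ, (∀ y', 0 < y' → y' < y → π t (spk m y') ≤ u) ∧
      (∀ y', y < y' → u ≤ π t (spk m y')) ∧
      (∀ d, 0 < d → d < y - z → π r (spk m d) ≤ q) ∧
      (∀ d, y - z < d → q ≤ π r (spk m d)) ∧
      (∀ z', 0 < z' → z' < z → π t (spk (m - r) z') ≤ u - q) ∧
      (∀ z', z < z' → u - q ≤ π t (spk (m - r) z')) := by
  have hm := M.hm
  obtain ⟨ε, hε, hε', hε''⟩ : ∃ ε : ℝ, 0 ≤ ε ∧ (t = m → ε = 0) ∧ (t ≠ m → 0 < ε) := by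
    rcases eq_or_ne t m with h | h
    · exact ⟨0, le_rfl, fun _ => rfl, fun h' => absurd h h'⟩
    · exact ⟨1, zero_le_one, fun h' => absurd h' h, fun _ => one_pos⟩
  have hv2 : ValD m (W2 m r ε y z) := W2_val hr1 hr2 hε hz.le (by linarith)
  have Wm : W2 m r ε y z m = ε + y := by
    unfold W2; split_ifs <;> first | omega | rfl
  have Wr : W2 m r ε y z (m - r) = ε + z := by
    unfold W2; split_ifs <;> first | omega | rfl
  have Wt : W2 m r ε y z (m - t) = ε := by
    unfold W2; split_ifs <;> first | omega | skip
    · exact (hε' (by omega)).symm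
    · rfl
  have Wn : ∀ j, j ≠ m → W2 m r ε y z j ≤ ε + z := by
    intro j hj; unfold W2; split_ifs <;> first | omega | contradiction | linarith
  have hu0 := M.πnn _ t hv2 ht2
  have hq0 := M.πnn _ r hv2 hr2.le
  have hpos : ∀ a j (d : ℝ), 1 ≤ a → a ≤ m → 1 ≤ j → j ≤ m → 0 < d → 0 ≤ π a (spk j d) :=
    fun a j d h1 h2 h3 h4 hd => M.πnn _ _ (spk_val h3 h4 hd.le) h2
  have hbest : ∀ j, j = m ∨ (∀ i, i ≤ m → W2 m r ε y z i ≤ W2 m r ε y z j) → j = m := by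
    intro j hj
    by_contra hc
    have := (hj.resolve_left hc) m le_rfl
    have := Wn j hc
    linarith
  refine ⟨π t (W2 m r ε y z), π r (W2 m r ε y z), ?_, ?_, ?_, ?_, ?_, ?_⟩
  · intro y' h1 h2
    exact M.F1 hv2 ht1 ht2 (by omega) le_rfl h1 (by rw [Wm, Wt]; linarith)
  · intro y' h
    refine M.F2 hv2 ht1 ht2 (hpos _ _ _ ht1 ht2 (by omega) le_rfl (by linarith)) ?_
    intro j hj1 hj2 hj3 hj4 hj5
    obtain rfl := hbest j hj5
    exact ⟨y', by rw [Wm, Wt]; linarith, le_rfl⟩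
  · intro d h1 h2
    exact M.F1 hv2 hr1 hr2.le (by omega) le_rfl h1 (by rw [Wm, Wr]; linarith)
  · intro d h
    refine M.F2 hv2 hr1 hr2.le (hpos _ _ _ hr1 hr2.le (by omega) le_rfl (by linarith)) ?_
    intro j hj1 hj2 hj3 hj4 hj5
    obtain rfl := hbest j hj5
    exact ⟨d, by rw [Wm, Wr]; linarith, le_rfl⟩
  · intro z' hz0 hz'
    by_contra hc
    push Not at hc
    have hα := M.αpos
    have hKpos : 0 < π t (spk (m - r) z') :=
      lt_of_lt_of_le (div_pos hz0 hα) (M.lb ht1 ht2 (by omega) (by omega) (by omega) hz0)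
    obtain ⟨e, he1, he2⟩ := exists_between (max_lt hc hKpos)
    obtain ⟨he0, he1⟩ := max_lt_iff.1 he1
    obtain ⟨x', hx'⟩ : ∃ x', x' = π r (W2 m r ε y z) + 1 := ⟨_, rfl⟩
    have hv1 : ValD m (W1 t r (x' + e) x') := W1_val ht1 ht2 hr1 (by linarith) (by linarith)
    obtain ⟨hρ, hcase⟩ := M.test (x := x' + e) (x' := x') ht1 ht2 hr1 hr2 hrt hε hε' hε'' hz hzy
      (by linarith) (by linarith)
    have V1t : W1 t r (x' + e) x' t = x' + e := by simp [W1]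
    have V1r : W1 t r (x' + e) x' r = x' := by simp [W1, hrt]
    have hA := M.A _ _ hv1 hv2 t ht2
    have hB := M.B _ _ hv1 hv2 (m - r) (by omega)
    have hft : f (W1 t r (x' + e) x') (W2 m r ε y z) = t := by
      rcases hcase with h | h | h
      · rw [h, V1t, hv1.2.1, M.π0] at hA
        linarith
      · rw [h, V1t, V1r] at hA
        linarith
      · exact h
    rw [hft, hρ, Wr, Wt] at hB
    have hup : ρ (m - r) (W1 t r (x' + e) x') ≤ z' := by
      refine M.swap.F2 hv1 (by omega) (by omega) hz0.le ?_
      intro j hj1 hj2 hj3 hj4 _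
      rw [Nat.sub_sub_self hr2.le, V1r] at hj4 ⊢
      rcases eq_or_ne j t with rfl | hjt
      · obtain ⟨d, hd1, hd2⟩ := exists_between he2
        refine ⟨d, by rw [V1t]; linarith, ?_⟩
        by_contra hcc
        push Not at hcc
        have := M.P1 (x := d) (y := z') ht1 ht2 (by omega) (by omega) (by linarith) hz0 hcc
        linarith
      · refine ⟨z' / α, ?_, ?_⟩
        · have : W1 t r (x' + e) x' j ≤ x' := by
            unfold W1; split_ifs <;> first | omega | contradiction | linarith
          have : 0 < z' / α := by positivity
          linarith
        · have := M.swap.ub (t := m - r) (j := j) (y := z' / α) (by omega) (by omega) hj1 hj2 hj3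
            (by positivity)
          rwa [mul_div_cancel₀ _ hα.ne'] at this
    linarith
  · intro z' hz'
    by_contra hc
    push Not at hc
    have hα := M.αpos
    have hKpos : 0 ≤ π t (spk (m - r) z') :=
      hpos _ _ _ ht1 ht2 (by omega) (by omega) (by linarith)
    obtain ⟨e, he1, he2⟩ := exists_between hc
    obtain ⟨x', hx'⟩ : ∃ x', x' = π r (W2 m r ε y z) + 1 := ⟨_, rfl⟩
    have hv1 : ValD m (W1 t r (x' + e) x') := W1_val ht1 ht2 hr1 (by linarith) (by linarith)
    obtain ⟨hρ, hcase⟩ := M.test (x := x' + e) (x' := x') ht1 ht2 hr1 hr2 hrt hε hε' hε'' hz hzy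
      (by linarith) (by linarith)
    have V1t : W1 t r (x' + e) x' t = x' + e := by simp [W1]
    have V1r : W1 t r (x' + e) x' r = x' := by simp [W1, hrt]
    have hA := M.A _ _ hv1 hv2 r hr2.le
    have hB := M.B _ _ hv1 hv2 (m - t) (by omega)
    have hfr : f (W1 t r (x' + e) x') (W2 m r ε y z) = r := by
      rcases hcase with h | h | h
      · rw [h, V1r, hv1.2.1, M.π0] at hA
        linarith
      · exact h
      · rw [h, V1t, V1r] at hA
        linarith
    rw [hfr, hρ, Wr, Wt] at hB
    obtain ⟨d, hd1, hd2⟩ := exists_between he1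
    have e1 := M.swap.F1 hv1 (t := m - r) (j := t) (d := d) (by omega) (by omega)
      ht1 ht2 (by linarith) (by rw [V1t, Nat.sub_sub_self hr2.le, V1r]; linarith)
    have e2 := M.P2 (x := d) (y := z') ht1 ht2 (j := m - r) (by omega) (by omega) (by omega)
      (by linarith) (by linarith) hd1
    linarith

theorem tri_lin (M : Mech m α f π ρ) {t r : ℕ} (ht1 : 1 ≤ t) (ht2 : t ≤ m)
    (hr1 : 1 ≤ r) (hr2 : r < m) (hrt : r ≠ t) :
    ∀ d, 0 < d → π t (spk m d) = π t (spk m 1) * d ∧ π r (spk m d) = π t (spk m 1) * d ∧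
      π t (spk (m - r) d) = π t (spk m 1) * d := by
  have hm := M.hm
  have hpos : ∀ a j (d : ℝ), 1 ≤ a → a ≤ m → 1 ≤ j → j ≤ m → 0 < d → 0 ≤ π a (spk j d) :=
    fun a j d h1 h2 h3 h4 hd => M.πnn _ _ (spk_val h3 h4 hd.le) h2
  refine cauchy_lin (G := fun d => π t (spk m d)) (H := fun d => π r (spk m d))
    (K := fun d => π t (spk (m - r) d)) M.αpos ?_ ?_ ?_ ?_ ?_
  · exact fun d hd => hpos _ _ _ ht1 ht2 (by omega) le_rfl hd
  · exact fun d hd => ⟨hpos _ _ _ hr1 hr2.le (by omega) le_rfl hd,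
      M.ub hr1 hr2.le (by omega) le_rfl (by omega) hd⟩
  · exact fun d hd => ⟨hpos _ _ _ ht1 ht2 (by omega) (by omega) hd,
      M.ub ht1 ht2 (by omega) (by omega) (by omega) hd⟩
  · intro y0 u0 z0 hy hu hz h
    obtain ⟨z, hz1, hz2⟩ := exists_between (max_lt hz (by linarith : y0 - u0 < z0))
    obtain ⟨hz3, hz4⟩ := max_lt_iff.1 hz1
    obtain ⟨y, hy1, hy2⟩ := exists_between (max_lt (by linarith : y0 < u0 + z)
      (by linarith : z < u0 + z))
    obtain ⟨hy3, hy4⟩ := max_lt_iff.1 hy1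
    obtain ⟨u, q, c1, c2, c3, c4, c5, c6⟩ := M.triple ht1 ht2 hr1 hr2 hrt hz3 hy4
    have e1 := c1 y0 hy hy3
    have e2 := c4 u0 (by linarith)
    have e3 := c6 z0 hz2
    show π t (spk m y0) ≤ π r (spk m u0) + π t (spk (m - r) z0)
    linarith
  · intro y0 u0 z0 hu hz h
    obtain ⟨z, hz1, hz2⟩ := exists_between (by linarith : z0 < y0 - u0)
    obtain ⟨y, hy1, hy2⟩ := exists_between (by linarith : u0 + z < y0)
    obtain ⟨u, q, c1, c2, c3, c4, c5, c6⟩ := M.triple (y := y) (z := z) ht1 ht2 hr1 hr2 hrt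
      (by linarith) (by linarith)
    have e1 := c2 y0 hy2
    have e2 := c3 u0 hu (by linarith)
    have e3 := c5 z0 hz hz1
    show π r (spk m u0) + π t (spk (m - r) z0) ≤ π t (spk m y0)
    linarith

theorem all_lin (M : Mech m α f π ρ) : ∃ w : ℝ, 0 < w ∧ ∀ t j, 1 ≤ t → t ≤ m → 1 ≤ j → j ≤ m →
    t + j ≠ m → ∀ d, 0 < d → π t (spk j d) = w * d := by
  have hm := M.hm
  have h0 : ∀ t, 1 ≤ t → t ≤ m → ∀ d, 0 < d → π t (spk m d) = π 1 (spk m 1) * d := by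
    intro t h1 h2 d hd
    rcases eq_or_ne t 1 with rfl | h
    · have a := M.tri_lin (t := m) (r := 1) (by omega) le_rfl le_rfl (by omega) (by omega)
      rw [(a d hd).2.1, (a 1 one_pos).2.1, mul_one]
    · have a := M.tri_lin (t := t) (r := 1) h1 h2 le_rfl (by omega) (by omega)
      rw [(a d hd).1, (a 1 one_pos).2.1, mul_one]
  refine ⟨π 1 (spk m 1), ?_, ?_⟩
  · have := M.lb (t := 1) (j := m) (y := 1) le_rfl (by omega) (by omega) le_rfl (by omega) one_pos
    exact lt_of_lt_of_le (div_pos one_pos M.αpos) this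
  · intro t j h1 h2 h3 h4 hne d hd
    rcases eq_or_ne j m with rfl | h
    · exact h0 t h1 h2 d hd
    · have a := M.tri_lin (t := t) (r := m - j) h1 h2 (by omega) (by omega) (by omega)
      have := (a d hd).2.2
      rw [Nat.sub_sub_self h4, h0 t h1 h2 1 one_pos, mul_one] at this
      exact this

theorem dual_lin (M : Mech m α f π ρ) {w : ℝ} (hw : 0 < w)
    (h : ∀ t j, 1 ≤ t → t ≤ m → 1 ≤ j → j ≤ m → t + j ≠ m → ∀ d, 0 < d → π t (spk j d) = w * d) :
    ∀ j t, 1 ≤ j → j ≤ m → 1 ≤ t → t ≤ m → j + t ≠ m → ∀ d, 0 < d → ρ j (spk t d) = w⁻¹ * d := by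
  intro j t h1 h2 h3 h4 hne d hd
  have hd' : 0 < w⁻¹ * d := by positivity
  have hwd : w * (w⁻¹ * d) = d := by field_simp
  apply le_antisymm
  · by_contra hc
    push Not at hc
    obtain ⟨y, hy1, hy2⟩ := exists_between hc
    have := M.P1 h3 h4 h1 h2 hd (by linarith) hy2
    rw [h t j h3 h4 h1 h2 (by omega) y (by linarith)] at this
    have := mul_lt_mul_of_pos_left hy1 hw
    linarith
  · apply le_of_forall_lt_imp_le_of_dense
    intro y hy
    rcases le_or_gt y 0 with hy0 | hy0
    · exact hy0.trans (M.ρnn _ _ (spk_val h3 h4 hd.le) h2)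
    · refine M.P2 h3 h4 h1 h2 (by omega) hd hy0 ?_
      rw [h t j h3 h4 h1 h2 (by omega) y hy0]
      have := mul_lt_mul_of_pos_left hy hw
      linarith

/-- Final comparison when bidder 1 gets at least one item. -/
theorem final (M : Mech m α f π ρ) {w : ℝ} (hw : 0 < w)
    (h : ∀ t j, 1 ≤ t → t ≤ m → 1 ≤ j → j ≤ m → t + j ≠ m → ∀ d, 0 < d → π t (spk j d) = w * d)
    {v₁ v₂ : ℕ → ℝ} (h1 : ValD m v₁) (h2 : ValD m v₂) (hf : 1 ≤ f v₁ v₂) {s : ℕ} (hs : s ≤ m) :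
    v₁ s + w * v₂ (m - s) ≤ v₁ (f v₁ v₂) + w * v₂ (m - f v₁ v₂) := by
  have hfm := M.hf _ _ h1 h2
  have hA := M.A _ _ h1 h2 s hs
  generalize f v₁ v₂ = t at *
  have low : ∀ j, j ≤ m → w * (v₂ j - v₂ (m - t)) ≤ π t v₂ := by
    intro j hj
    rcases le_or_gt (v₂ j) (v₂ (m - t)) with hle | hlt
    · have := M.πnn _ t h2 hfm
      have : w * (v₂ j - v₂ (m - t)) ≤ 0 := mul_nonpos_of_nonneg_of_nonpos hw.le (by linarith)
      linarith
    · have hj0 : j ≠ 0 := by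
        rintro rfl
        rw [h2.2.1] at hlt
        have := h2.1 (m - t)
        linarith
      have hne : t + j ≠ m := by
        intro he
        have : j = m - t := by omega
        rw [this] at hlt
        exact lt_irrefl _ hlt
      rw [mul_comm, ← le_div_iff₀ hw]
      apply le_of_forall_lt_imp_le_of_dense
      intro d hd
      rw [le_div_iff₀ hw, mul_comm]
      rcases le_or_gt d 0 with hd0 | hd0
      · have := M.πnn _ t h2 hfm
        have := mul_nonpos_of_nonneg_of_nonpos hw.le hd0
        linarith
      · have := M.F1 h2 hf hfm (by omega) hj hd0 hd
        rwa [h t j hf hfm (by omega) hj hne d hd0] at this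
  rcases Nat.eq_zero_or_pos s with rfl | hs0
  · have := low m le_rfl
    rw [M.π0] at hA
    rw [Nat.sub_zero]
    linarith
  · obtain ⟨k, hk, hkmax⟩ := Finset.exists_max_image (Finset.range (m + 1)) v₂ ⟨0, by simp⟩
    have hk' : k ≤ m := by simpa [Nat.lt_succ_iff] using hk
    have hkmax' : ∀ i, i ≤ m → v₂ i ≤ v₂ k := fun i hi => hkmax i (by simp; omega)
    have up : π s v₂ ≤ w * (v₂ k - v₂ (m - s)) := by
      apply le_of_forall_pos_le_add
      intro e he
      have hks := hkmax' (m - s) (by omega)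
      have : 0 ≤ w * (v₂ k - v₂ (m - s)) := mul_nonneg hw.le (by linarith)
      refine M.F2 h2 hs0 hs (by linarith) ?_
      intro j hj1 hj2 hj3 hj4 _
      have hj := hkmax' j hj2
      have he' : 0 < e / w := by positivity
      refine ⟨v₂ k - v₂ (m - s) + e / w, by linarith, ?_⟩
      rw [h s j hs0 hs hj1 hj2 hj3 _ (by linarith), mul_add, mul_div_cancel₀ _ hw.ne']
    have := low k hk'
    linarith

end Mech

/-- One-sided normalization of payments into a menu. -/
theorem menu {m : ℕ} {α : ℝ} {f : (ℕ → ℝ) → (ℕ → ℝ) → ℕ} {p : (ℕ → ℝ) → (ℕ → ℝ) → ℝ}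
    (hm : 2 ≤ m) (hα : 1 ≤ α)
    (hf : ∀ v₁ v₂, ValD m v₁ → ValD m v₂ → f v₁ v₂ ≤ m)
    (ht : ∀ v₁ v₁' v₂, ValD m v₁ → ValD m v₁' → ValD m v₂ →
      v₁ (f v₁' v₂) - p v₁' v₂ ≤ v₁ (f v₁ v₂) - p v₁ v₂)
    (ap : ∀ v₁ v₂, ValD m v₁ → ValD m v₂ → ∀ t, t ≤ m →
      v₁ t + v₂ (m - t) ≤ α * (v₁ (f v₁ v₂) + v₂ (m - f v₁ v₂))) :
    ∃ π : ℕ → (ℕ → ℝ) → ℝ, (∀ v, π 0 v = 0) ∧ (∀ v t, ValD m v → t ≤ m → 0 ≤ π t v) ∧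
      ∀ v₁ v₂, ValD m v₁ → ValD m v₂ → ∀ t, t ≤ m →
        v₁ t - π t v₂ ≤ v₁ (f v₁ v₂) - π (f v₁ v₂) v₂ := by
  have hz := zero_val hm
  have ex : ∀ t v, ∃ u, 1 ≤ t → t ≤ m → ValD m v → ValD m u ∧ f u v = t := by
    intro t v
    refine ⟨spk t (1 + α * ∑ j ∈ Finset.range (m + 1), v j), fun h1 h2 hv => ?_⟩
    have hS : ∀ j, j ≤ m → v j ≤ ∑ j ∈ Finset.range (m + 1), v j := fun j hj =>
      Finset.single_le_sum (fun i _ => hv.1 i) (by simp; omega)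
    generalize ∑ j ∈ Finset.range (m + 1), v j = S at *
    have hS0 : 0 ≤ S := (hv.1 0).trans (hS 0 (by omega))
    have hαS : 0 ≤ α * S := mul_nonneg (by linarith) hS0
    have hs : ValD m (spk t (1 + α * S)) := spk_val h1 h2 (by linarith)
    refine ⟨hs, ?_⟩
    by_contra hn
    have := ap _ _ hs hv t h2
    rw [spk_self, spk_ne _ hn, zero_add] at this
    have a := mul_le_mul_of_nonneg_left (hS (m - f (spk t (1 + α * S)) v) (by omega))
      (by linarith : 0 ≤ α)
    have := hv.1 (m - t)
    linarith
  choose u hu using ex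
  refine ⟨fun t v => if t = 0 then 0 else p (u t v) v - p (fun _ => 0) v, fun v => by simp, ?_, ?_⟩
  · intro v t hv h2
    rcases Nat.eq_zero_or_pos t with rfl | h1
    · simp
    · obtain ⟨a, b⟩ := hu t v h1 h2 hv
      have := ht _ _ v hz a hv
      simp only [Nat.pos_iff_ne_zero.1 h1, if_false]
      linarith
  · intro v₁ v₂ h1 h2 t htm
    have hfm := hf _ _ h1 h2
    have hzz := ht v₁ _ v₂ h1 hz h2
    have hpos := h1.1 (f (fun _ => 0) v₂)
    have hz1 := ht _ v₁ v₂ hz h1 h2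
    have own : f v₁ v₂ ≠ 0 → p (u (f v₁ v₂) v₂) v₂ = p v₁ v₂ := by
      intro hne
      obtain ⟨a, b⟩ := hu (f v₁ v₂) v₂ (by omega) hfm h2
      have e1 := ht _ v₁ v₂ a h1 h2
      have e2 := ht v₁ _ v₂ h1 a h2
      rw [b] at e1 e2
      linarith
    have oth : t ≠ 0 → v₁ t - p (u t v₂) v₂ ≤ v₁ (f v₁ v₂) - p v₁ v₂ := by
      intro hne
      obtain ⟨a, b⟩ := hu t v₂ (by omega) htm h2
      have e2 := ht v₁ _ v₂ h1 a h2
      rwa [b] at e2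
    by_cases c1 : f v₁ v₂ = 0 <;> by_cases c2 : t = 0
    · simp [c1, c2]
    · have := oth c2
      simp only [c1, c2, if_true, if_false]
      rw [c1] at this
      linarith
    · have := own c1
      simp only [c1, c2, if_true, if_false, h1.2.1]
      linarith
    · have := own c1
      have := oth c2
      simp only [c1, c2, if_false]
      linarith

/-- If `m ≥ 2` and `(f, p₁, p₂)` is a truthful mechanism for an
extended multi-unit auction with `m` items and 2 bidders guaranteeing a finite
approximation ratio `α ≥ 1` to the optimal welfare, then `f` is an affine
maximizer over the *full* range: there are weights `w₁, w₂ > 0` and constants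
`c t` (`t ∈ {0,…,m}`) such that `f v₁ v₂` maximizes
`w₁·v₁(t) + w₂·v₂(m−t) + c t` over all `t ∈ {0,…,m}`. -/
theorem truthful_approx_is_full_range_affine_maximizer
    (m : ℕ) (hm : 2 ≤ m)
    (f : (ℕ → ℝ) → (ℕ → ℝ) → ℕ) (p₁ p₂ : (ℕ → ℝ) → (ℕ → ℝ) → ℝ)
    (hfm : ∀ v₁ v₂, ValD m v₁ → ValD m v₂ → f v₁ v₂ ≤ m)
    (htruth : Truthful m f p₁ p₂)
    (α : ℝ) (hα : 1 ≤ α)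
    (happrox : ∀ v₁ v₂, ValD m v₁ → ValD m v₂ → ∀ t, t ≤ m →
      (1 / α) * (v₁ t + v₂ (m - t)) ≤ v₁ (f v₁ v₂) + v₂ (m - f v₁ v₂)) :
    ∃ w₁ w₂ : ℝ, 0 < w₁ ∧ 0 < w₂ ∧ ∃ c : ℕ → ℝ,
      ∀ v₁ v₂, ValD m v₁ → ValD m v₂ →
        ∀ t, t ≤ m → w₁ * v₁ t + w₂ * v₂ (m - t) + c t ≤
          w₁ * v₁ (f v₁ v₂) + w₂ * v₂ (m - f v₁ v₂) + c (f v₁ v₂) := by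
  obtain ⟨T1, T2⟩ := htruth
  have hα0 : 0 < α := by linarith
  have ap : ∀ v₁ v₂, ValD m v₁ → ValD m v₂ → ∀ t, t ≤ m →
      v₁ t + v₂ (m - t) ≤ α * (v₁ (f v₁ v₂) + v₂ (m - f v₁ v₂)) := by
    intro v₁ v₂ h1 h2 t ht
    have := mul_le_mul_of_nonneg_left (happrox v₁ v₂ h1 h2 t ht) hα0.le
    rwa [← mul_assoc, mul_one_div_cancel hα0.ne', one_mul] at this
  obtain ⟨π, π0, πnn, A⟩ := menu hm hα hfm T1 ap
  obtain ⟨ρ, ρ0, ρnn, B⟩ := menu (f := fun a b => m - f b a) (p := fun a b => p₂ b a) hm hα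
    (fun _ _ _ _ => Nat.sub_le _ _) (fun v₁ v₁' v₂ h1 h1' h2 => T2 v₂ v₁ v₁' h2 h1 h1') (by
      intro v₁ v₂ h1 h2 t ht
      have h := ap v₂ v₁ h2 h1 (m - t) (Nat.sub_le _ _)
      have hf := hfm v₂ v₁ h2 h1
      rw [Nat.sub_sub_self ht] at h
      simp only [Nat.sub_sub_self hf]
      linarith)
  have M : Mech m α f π ρ := ⟨hm, hα, hfm, ap, π0, ρ0, πnn, ρnn, A,
    fun v₁ v₂ h1 h2 t ht => B v₂ v₁ h2 h1 t ht⟩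
  obtain ⟨w, hw, hlin⟩ := M.all_lin
  refine ⟨1, w, one_pos, hw, fun _ => 0, fun v₁ v₂ h1 h2 t ht => ?_⟩
  rcases Nat.eq_zero_or_pos (f v₁ v₂) with h0 | h0
  · have := M.swap.final (inv_pos.2 hw) (M.dual_lin hw hlin) h2 h1 (by omega)
      (s := m - t) (by omega)
    simp only [Nat.sub_sub_self ht, h0, Nat.sub_zero, Nat.sub_self] at this ⊢
    have := mul_le_mul_of_nonneg_left this hw.le
    simp only [mul_add, mul_inv_cancel_left₀ hw.ne'] at this
    linarith
  · have := M.final hw hlin h1 h2 h0 ht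
    linarith
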